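/- Let R be a finite commutative chain ring of nilpotency index e with residue field F_q, and let n be a positive integer with gcd(n,q)=1. The number of nonsingular n×n circulant matrices over R equals q^{(e-1)n} times the number of nonsingular n×n circulant matrices over F_q, i.e., q^{en} ∏_{d|n} (1 - q^{-ord_d(q)})^{φ(d)/ord_d(q)}. -/

import Mathlib

/-!
Reduction `R → F_q` is a surjective local homomorphism, so it detects invertibility of determinants,
and every circulant matrix over `F_q` has `|𝔪| ^ n` circulant lifts. Multiplication by `γ ^ j`
identifies `R ⧸ 𝔪` with `(γ ^ j) ⧸ (γ ^ (j + 1))` for `j < e`, whence `|𝔪| = q ^ (e - 1)`.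

Over `F_q`, the circulant matrix of `w` is the matrix of multiplication by `∑ i, w i • X ^ i` on
`F_q[X] ⧸ (X ^ n - 1)`, so nonsingular circulants correspond to units of this ring. As `n` is prime
to `q`, it is the product over `d ∣ n` of `φ(d) / ord_d(q)` copies of the field with
`q ^ ord_d(q)` elements.
-/

open Polynomial UniqueFactorizationMonoid

section Lifting

theorem card_subtype_comp_of_surjective {A B : Type*} [AddGroup A] [AddGroup B] (f : A →+ B)
    (hf : Function.Surjective f) (p : B → Prop) :
    Nat.card {a // p (f a)} = Nat.card f.ker * Nat.card {b // p b} := by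
  let t : Set (A ⧸ f.ker) := {x | p (QuotientAddGroup.quotientKerEquivOfSurjective f hf x)}
  have ht : Nat.card t = Nat.card {b // p b} := Nat.card_congr <|
    (QuotientAddGroup.quotientKerEquivOfSurjective f hf).toEquiv.subtypeEquiv fun _ ↦ Iff.rfl
  rw [← ht, ← Nat.card_prod]
  exact Nat.card_congr (QuotientAddGroup.preimageMkEquivAddSubgroupProdSet f.ker t)

theorem card_ker_compLeft {A B : Type*} [AddGroup A] [AddZeroClass B] (f : A →+ B)
    (ι : Type*) [Finite ι] : Nat.card (f.compLeft ι).ker = Nat.card f.ker ^ Nat.card ι := by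
  rw [← Nat.card_fun]
  exact Nat.card_congr <| (Equiv.subtypeEquivRight fun _ ↦ funext_iff).trans
    (Equiv.subtypePiEquivPi (p := fun _ a ↦ f a = 0))

variable {R S : Type*} [CommRing R] [CommRing S] (f : R →+* S) [IsLocalHom f]
  {G : Type*} [Fintype G] [DecidableEq G]

theorem isUnit_det_map_iff (M : Matrix G G R) : IsUnit (M.map f).det ↔ IsUnit M.det := by
  rw [← RingHom.mapMatrix_apply, ← RingHom.map_det, isUnit_map_iff]

theorem card_nonsingular_circulant_of_surjective [Sub G] (hf : Function.Surjective f) :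
    Nat.card {v : G → R // IsUnit (Matrix.circulant v).det} =
      Nat.card (RingHom.ker f) ^ Nat.card G *
        Nat.card {w : G → S // IsUnit (Matrix.circulant w).det} := by
  let reduce : (G → R) →+ (G → S) := (f : R →+ S).compLeft G
  calc Nat.card {v : G → R // IsUnit (Matrix.circulant v).det}
      = Nat.card {v : G → R // IsUnit (Matrix.circulant (reduce v)).det} :=
        Nat.card_congr <| Equiv.subtypeEquivRight fun v ↦
          (isUnit_det_map_iff f (Matrix.circulant v)).symm
    _ = Nat.card reduce.ker * Nat.card {w : G → S // IsUnit (Matrix.circulant w).det} :=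
        card_subtype_comp_of_surjective reduce hf.comp_left
          fun w ↦ IsUnit (Matrix.circulant w).det
    _ = _ := by rw [card_ker_compLeft]; rfl

end Lifting

section LocalRing

open IsLocalRing

variable {R : Type*} [CommRing R] [IsLocalRing R]

theorem mul_mem_maximalIdeal_mul_span_singleton_iff {a : R} (ha : a ≠ 0) {r : R} :
    r * a ∈ maximalIdeal R * Ideal.span {a} ↔ r ∈ maximalIdeal R := by
  rw [Ideal.mem_mul_span_singleton]
  refine ⟨fun ⟨m, hm, hma⟩ ↦ ?_, fun hr ↦ ⟨r, hr, rfl⟩⟩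
  have hsub : r - m ∈ maximalIdeal R := fun hu ↦
    ha <| hu.mul_right_eq_zero.mp <| by rw [sub_mul, hma, sub_self]
  simpa only [sub_add_cancel] using add_mem hsub hm

theorem card_span_singleton {a : R} (ha : a ≠ 0) :
    Nat.card (Ideal.span {a}) =
      Nat.card (R ⧸ maximalIdeal R) * Nat.card ↥(maximalIdeal R * Ideal.span {a}) := by
  let I := (maximalIdeal R * Ideal.span {a}).toAddSubgroup
  let mulA := AddMonoidHom.mulRight a
  have hrange : mulA.range = (Ideal.span {a}).toAddSubgroup := by
    ext x
    exact Ideal.mem_span_singleton'.symm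
  have hcomap : I.comap mulA = (maximalIdeal R).toAddSubgroup := by
    ext r
    exact mul_mem_maximalIdeal_mul_span_singleton_iff ha
  have hindex : I.relIndex (Ideal.span {a}).toAddSubgroup = Nat.card (R ⧸ maximalIdeal R) := by
    rw [← hrange, ← AddSubgroup.index_comap, hcomap]
    rfl
  have hle : I ≤ (Ideal.span {a}).toAddSubgroup := Ideal.mul_le_right (I := maximalIdeal R)
  have htower := AddSubgroup.relIndex_mul_relIndex ⊥ I _ bot_le hle
  rw [AddSubgroup.relIndex_bot_left, AddSubgroup.relIndex_bot_left, hindex, mul_comm] at htower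
  exact htower.symm

variable {γ : R} {e : ℕ}

theorem card_span_pow (hγ : Ideal.span {γ} = maximalIdeal R) (he : γ ^ e = 0)
    (he' : γ ^ (e - 1) ≠ 0) {j k : ℕ} (hjk : j + k = e) :
    Nat.card (Ideal.span {γ ^ j}) = Nat.card (R ⧸ maximalIdeal R) ^ k := by
  induction k generalizing j with
  | zero =>
    obtain rfl : j = e := hjk
    simp [he]
  | succ k ih =>
    have hj : γ ^ j ≠ 0 := fun h ↦ he' (pow_eq_zero_of_le (by omega) h)
    have hmul : maximalIdeal R * Ideal.span {γ ^ j} = Ideal.span {γ ^ (j + 1)} := by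
      rw [← hγ, Ideal.span_singleton_mul_span_singleton, pow_succ']
    rw [card_span_singleton hj, hmul, ih (by omega), pow_succ']

theorem card_maximalIdeal (hγ : Ideal.span {γ} = maximalIdeal R) (he : γ ^ e = 0)
    (he' : γ ^ (e - 1) ≠ 0) :
    Nat.card (maximalIdeal R) = Nat.card (R ⧸ maximalIdeal R) ^ (e - 1) := by
  have he0 : e ≠ 0 := by
    rintro rfl
    exact he' he
  rw [← card_span_pow hγ he he' (show 1 + (e - 1) = e by omega), pow_one, hγ]

end LocalRing

section GroupAlgebra

variable {R A G : Type*} [CommRing R] [Ring A] [Algebra R A] [Fintype G] [DecidableEq G]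

theorem isUnit_det_leftMulMatrix_iff (b : Module.Basis G R A) (a : A) :
    IsUnit (Algebra.leftMulMatrix b a).det ↔ IsUnit a := by
  have := Module.Finite.of_basis b
  have := Module.Free.of_basis b
  rw [← Algebra.norm_eq_matrix_det, Algebra.norm_apply, ← LinearMap.isUnit_iff_isUnit_det,
    Algebra.lmul_isUnit_iff]

variable [AddGroup G] {b : Module.Basis G R A}

theorem leftMulMatrix_eq_circulant (hb : ∀ i j, b i * b j = b (i + j)) (v : G → R) :
    Algebra.leftMulMatrix b (b.equivFun.symm v) = Matrix.circulant v := by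
  ext i j
  simp [Algebra.leftMulMatrix_eq_repr_mul, Module.Basis.equivFun_symm_apply, Finset.sum_mul, hb,
    Finsupp.single_apply, ← eq_sub_iff_add_eq]

theorem card_nonsingular_circulant_eq_card_units (hb : ∀ i j, b i * b j = b (i + j)) :
    Nat.card {v : G → R // IsUnit (Matrix.circulant v).det} = Nat.card Aˣ := by
  have hunit (v : G → R) :
      IsUnit (Matrix.circulant v).det ↔ b.equivFun.symm v ∈ IsUnit.submonoid A := by
    rw [← leftMulMatrix_eq_circulant hb, isUnit_det_leftMulMatrix_iff, IsUnit.mem_submonoid_iff]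
  exact Nat.card_congr <| (b.equivFun.symm.toEquiv.subtypeEquiv hunit).trans
    Submonoid.unitsTypeEquivIsUnitSubmonoid.symm.toEquiv

end GroupAlgebra

section CyclicBasis

variable (R : Type*) [CommRing R] [Nontrivial R] (n : ℕ) [NeZero n]

/-- The power basis `1, X, …, X ^ (n - 1)` of `R[X] ⧸ (X ^ n - 1)`, indexed by `ZMod n` to identify
this ring with the group algebra of the cyclic group of order `n`. -/
noncomputable def cyclicBasis : Module.Basis (ZMod n) R (AdjoinRoot (X ^ n - 1 : R[X])) :=
  (AdjoinRoot.powerBasis' (monic_X_pow_sub_C 1 (NeZero.ne n))).basis.reindex <|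
    (finCongr (natDegree_X_pow_sub_C (r := (1 : R)))).trans (ZMod.finEquiv n).toEquiv

theorem cyclicBasis_apply (i : ZMod n) :
    cyclicBasis R n i = AdjoinRoot.root (X ^ n - 1 : R[X]) ^ i.val := by
  have hval : ((ZMod.finEquiv n).symm i : ℕ) = i.val := by
    obtain ⟨k, rfl⟩ := Nat.exists_eq_succ_of_ne_zero (NeZero.ne n)
    rfl
  let pb := AdjoinRoot.powerBasis' (monic_X_pow_sub_C (1 : R) (NeZero.ne n))
  rw [← hval]
  exact (pb.basis.reindex_apply _ i).trans (pb.basis_eq_pow _)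

theorem cyclicBasis_mul (i j : ZMod n) :
    cyclicBasis R n i * cyclicBasis R n j = cyclicBasis R n (i + j) := by
  have hroot : AdjoinRoot.root (X ^ n - 1 : R[X]) ^ n = 1 := by
    have h := AdjoinRoot.mk_self (f := (X ^ n - 1 : R[X]))
    rwa [map_sub, map_pow, map_one, AdjoinRoot.mk_X, sub_eq_zero] at h
  simp only [cyclicBasis_apply, ← pow_add, ZMod.val_add]
  exact pow_eq_pow_mod _ hroot

end CyclicBasis

section Units

theorem card_units_quotient_span_prod {A ι : Type*} [CommRing A] {s : Finset ι} {f : ι → A}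
    (hf : (s : Set ι).Pairwise (Function.onFun IsCoprime f)) :
    Nat.card (A ⧸ Ideal.span {∏ i ∈ s, f i})ˣ =
      ∏ i ∈ s, Nat.card (A ⧸ Ideal.span {f i})ˣ := by
  have hcop : Pairwise (Function.onFun IsCoprime fun i : s ↦ f i) := fun i j hij ↦
    hf i.2 j.2 (Subtype.coe_injective.ne hij)
  have hspan : Ideal.span {∏ i ∈ s, f i} = ⨅ i : s, Ideal.span {f i} := by
    rw [Ideal.iInf_span_singleton hcop, Finset.prod_coe_sort]
  let crt := Ideal.quotientInfRingEquivPiQuotient (fun i : s ↦ Ideal.span {f i})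
    fun i j hij ↦ (Ideal.isCoprime_span_singleton_iff _ _).mpr (hcop hij)
  rw [hspan, Nat.card_congr ((Units.mapEquiv crt.toMulEquiv).trans MulEquiv.piUnits).toEquiv,
    Nat.card_pi, Finset.prod_coe_sort s fun i ↦ Nat.card (A ⧸ Ideal.span {f i})ˣ]

theorem pairwise_isCoprime_of_separable_prod {A ι : Type*} [CommSemiring A] {s : Finset ι}
    {f : ι → A[X]}
    (h : (∏ i ∈ s, f i).Separable) : (s : Set ι).Pairwise (Function.onFun IsCoprime f) := by
  classical
  intro i hi j hj hij
  have hdvd : f i * f j ∣ ∏ k ∈ s, f k := by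
    rw [← Finset.prod_pair hij]
    exact Finset.prod_dvd_prod_of_subset _ _ _ (Finset.insert_subset hi (by simpa using hj))
  exact (h.of_dvd hdvd).isCoprime

theorem pairwise_isCoprime_normalizedFactors {A : Type*} [CommRing A] [IsDomain A]
    [IsPrincipalIdealRing A] [NormalizationMonoid A] (a : A) :
    {p | p ∈ normalizedFactors a}.Pairwise IsCoprime := by
  intro p hp r hr hpr
  have hp_irr := irreducible_of_normalized_factor p hp
  refine hp_irr.coprime_iff_not_dvd.mpr fun hdvd ↦ hpr ?_
  rw [← normalize_normalized_factor p hp, ← normalize_normalized_factor r hr,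
    normalize_eq_normalize_iff_associated]
  exact hp_irr.associated_of_dvd (irreducible_of_normalized_factor r hr) hdvd

variable {K : Type*} [Field K]

theorem card_units_adjoinRoot_of_irreducible {P : K[X]} (hP : Irreducible P) :
    Nat.card (AdjoinRoot P)ˣ = Nat.card K ^ P.natDegree - 1 := by
  have : Fact (Irreducible P) := ⟨hP⟩
  let pb := AdjoinRoot.powerBasis hP.ne_zero
  have := pb.finite
  rw [Nat.card_units, Module.natCard_eq_pow_finrank (K := K), pb.finrank,
    AdjoinRoot.powerBasis_dim]

theorem card_units_adjoinRoot_of_squarefree [Finite K] [DecidableEq K] {f : K[X]}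
    (hf : Squarefree f) :
    Nat.card (AdjoinRoot f)ˣ =
      ∏ P ∈ (normalizedFactors f).toFinset, (Nat.card K ^ P.natDegree - 1) := by
  have hnodup := (squarefree_iff_nodup_normalizedFactors hf.ne_zero).mp hf
  have hassoc : Associated (∏ P ∈ (normalizedFactors f).toFinset, P) f := by
    rw [Finset.prod_eq_multiset_prod, Multiset.toFinset_val, hnodup.dedup, Multiset.map_id']
    exact prod_normalizedFactors hf.ne_zero
  have hcop : ((normalizedFactors f).toFinset : Set K[X]).Pairwise IsCoprime :=
    (pairwise_isCoprime_normalizedFactors f).mono fun _ ↦ Multiset.mem_toFinset.mp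
  change Nat.card (K[X] ⧸ Ideal.span {f})ˣ = _
  rw [← Ideal.span_singleton_eq_span_singleton.mpr hassoc, card_units_quotient_span_prod hcop]
  refine Finset.prod_congr rfl fun P hP ↦ ?_
  exact card_units_adjoinRoot_of_irreducible
    (irreducible_of_normalized_factor P (Multiset.mem_toFinset.mp hP))

end Units

section FiniteField

theorem natCast_ne_zero_of_coprime_card {A : Type*} [NonAssocRing A] [Nontrivial A] {n : ℕ}
    (hn : n.Coprime (Nat.card A)) : (n : A) ≠ 0 := by
  intro h
  have hdvd : addOrderOf (1 : A) ∣ Nat.gcd n (Nat.card A) :=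
    Nat.dvd_gcd (addOrderOf_dvd_of_nsmul_eq_zero (by simpa using h)) (addOrderOf_dvd_natCard 1)
  rw [hn.gcd_eq_one, Nat.dvd_one, AddMonoid.addOrderOf_eq_one_iff] at hdvd
  exact one_ne_zero hdvd

variable {K : Type*} [Field K] [Finite K]

theorem card_units_adjoinRoot_cyclotomic {d : ℕ} (hd : d.Coprime (Nat.card K)) :
    Nat.card (AdjoinRoot (cyclotomic d K))ˣ =
      (Nat.card K ^ orderOf (Nat.card K : ZMod d) - 1) ^
        (d.totient / orderOf (Nat.card K : ZMod d)) := by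
  classical
  have : Fintype K := Fintype.ofFinite K
  have : NeZero (d : K) := ⟨natCast_ne_zero_of_coprime_card hd⟩
  obtain ⟨p, _, f, hp, hcard⟩ := FiniteField.card' K
  have : Fact p.Prime := ⟨hp⟩
  have hpd : p.Coprime d := by
    rw [Nat.card_eq_fintype_card, hcard] at hd
    exact ((Nat.coprime_pow_right_iff f.pos _ _).mp hd).symm
  have hord : orderOf (ZMod.unitOfCoprime _ (hpd.pow_left f)) =
      orderOf (Nat.card K : ZMod d) := by
    rw [← orderOf_units, ZMod.coe_unitOfCoprime, Nat.card_eq_fintype_card, hcard]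
  rw [card_units_adjoinRoot_of_squarefree (squarefree_cyclotomic d K), ← hord,
    ← normalizedFactors_cyclotomic_card hcard hpd]
  refine Finset.prod_eq_pow_card fun P hP ↦ ?_
  rw [natDegree_of_mem_normalizedFactors_cyclotomic hcard hpd (Multiset.mem_toFinset.mp hP)]

variable {n : ℕ} [NeZero n]

theorem card_units_adjoinRoot_X_pow_sub_one (hn : n.Coprime (Nat.card K)) :
    Nat.card (AdjoinRoot (X ^ n - 1 : K[X]))ˣ =
      ∏ d ∈ n.divisors, (Nat.card K ^ orderOf (Nat.card K : ZMod d) - 1) ^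
        (d.totient / orderOf (Nat.card K : ZMod d)) := by
  have hsep := X_pow_sub_one_separable_iff.mpr (natCast_ne_zero_of_coprime_card hn)
  rw [← prod_cyclotomic_eq_X_pow_sub_one (NeZero.pos n)] at hsep ⊢
  refine (card_units_quotient_span_prod (pairwise_isCoprime_of_separable_prod hsep)).trans ?_
  exact Finset.prod_congr rfl fun d hd ↦
    card_units_adjoinRoot_cyclotomic (hn.coprime_dvd_left (Nat.dvd_of_mem_divisors hd))

theorem card_nonsingular_circulant_of_coprime_card (hn : n.Coprime (Nat.card K)) :
    Nat.card {w : ZMod n → K // IsUnit (Matrix.circulant w).det} =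
      ∏ d ∈ n.divisors, (Nat.card K ^ orderOf (Nat.card K : ZMod d) - 1) ^
        (d.totient / orderOf (Nat.card K : ZMod d)) :=
  (card_nonsingular_circulant_eq_card_units (cyclicBasis_mul K n)).trans
    (card_units_adjoinRoot_X_pow_sub_one hn)

end FiniteField

/-- Over a commutative finite chain ring `R` of nilpotency index `e` with residue field of size
`q`, and `gcd(n,q) = 1`, the number of nonsingular `n × n` circulant matrices over `R` equals
`q^((e-1)n)` times the number of nonsingular `n × n` circulant matrices over the residue field,
i.e. `q^((e-1)n) · ∏_{d ∣ n} (q^(ord_d q) - 1)^(φ(d)/ord_d q)`. -/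
theorem card_nonsingular_circulant_chainRing {R : Type*} [CommRing R] [Finite R] [IsLocalRing R]
    (hchain : ∀ I J : Ideal R, I ≤ J ∨ J ≤ I)
    (γ : R) (hγ : Ideal.span {γ} = IsLocalRing.maximalIdeal R)
    (q e n : ℕ) (hq : Nat.card (R ⧸ IsLocalRing.maximalIdeal R) = q)
    (he : γ ^ e = 0) (he' : γ ^ (e - 1) ≠ 0)
    [NeZero n] (hgcd : Nat.gcd n q = 1) :
    Nat.card {v : ZMod n → R // IsUnit (Matrix.circulant v).det} =
      q ^ ((e - 1) * n) *
        Nat.card {w : ZMod n → R ⧸ IsLocalRing.maximalIdeal R //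
          IsUnit (Matrix.circulant w).det} ∧
    Nat.card {v : ZMod n → R // IsUnit (Matrix.circulant v).det} =
      q ^ ((e - 1) * n) * ∏ d ∈ n.divisors,
        (q ^ orderOf (q : ZMod d) - 1) ^ (Nat.totient d / orderOf (q : ZMod d)) := by
  have hlift : Nat.card {v : ZMod n → R // IsUnit (Matrix.circulant v).det} =
      q ^ ((e - 1) * n) *
        Nat.card {w : ZMod n → IsLocalRing.ResidueField R // IsUnit (Matrix.circulant w).det} := by
    rw [card_nonsingular_circulant_of_surjective _ IsLocalRing.residue_surjective,
      IsLocalRing.ker_residue, card_maximalIdeal hγ he he', hq, Nat.card_zmod, pow_mul]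
  have hcard : Nat.card (IsLocalRing.ResidueField R) = q := hq
  have : Finite (IsLocalRing.ResidueField R) := .of_surjective _ IsLocalRing.residue_surjective
  refine ⟨hlift, hlift.trans ?_⟩
  rw [card_nonsingular_circulant_of_coprime_card (hcard.symm ▸ hgcd), hcard]
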